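/- The class of e-low subsets of ℕ is not a splitting class: there exist non-c.e. e-low sets B₁, B₂ such that there is no e-low set C with both B₁ ⊕ C not e-low and B₂ ⊕ C not e-low; in particular the splitting condition fails for A = ∅ and 𝓑 = {B₁, B₂}. -/

import Mathlib

/-!
The two sets are the halves of a Kalimullin pair: sets `A`, `B` with a c.e. relation `U` such that
`A × B ⊆ U` and `Aᶜ × Bᶜ ⊆ Uᶜ`. Suppose that `A`, `B` are enumerable from `J_e(∅)`, that `C`
is e-low and that `B ≰_e C`. Then `A ⊕ C` is e-low (`KPair.elow`): replacing `A` by `{a | U a b}` in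
the enumeration of `D = K_{A ⊕ C}` gives a relation `V(x, b)`, enumerable from `C`, which holds for
all `x ∈ D` if `b ∈ B`, and only for `x ∈ D` if `b ∉ B`. As no section `{b | V(x, b)}` equals `B`,
`x ∉ D` is equivalent to `∃ b ∈ B, ¬ V(x, b)`, and lowness of `C` makes this enumerable from `J_e(∅)`.
With `C = ∅` both halves are e-low as soon as neither is c.e. For an arbitrary e-low `C`, either
`B ≤_e C`, so that `B ⊕ C ≡_e C` is e-low, or `B ≰_e C`, so that `A ⊕ C` is e-low.

Such a pair is given by `A = cut`, the lower cut of a real among the dyadic rationals, and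
`B = Aᶜ`, with `U` the strict order of the dyadic rationals (`kpair_cut`). The real is found by
halving intervals with the jump as oracle: in turn, the midpoint of the current interval is placed so
as to make `A ≠ W_e` and `Aᶜ ≠ W_e` (`not_ce_cut`, `not_ce_compl_cut`), and the history of these
decisions is enumerable from `J_e(∅)` (`EIn.cutNum`).

Reducibilities are handled through `EIn B p`, a normal form for enumerability of `p` from `B`, which
is closed under conjunction, disjunction, existential quantification and quantification over finite
lists.
-/

def Dset (u : ℕ) : Set ℕ := {i | Nat.testBit u i}

def enumOp (W A : Set ℕ) : Set ℕ := {x | ∃ u, Nat.pair x u ∈ W ∧ Dset u ⊆ A}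

def CE (W : Set ℕ) : Prop := ∃ f : ℕ →. ℕ, Partrec f ∧ W = f.Dom

def EnumRed (A B : Set ℕ) : Prop := ∃ W, CE W ∧ A = enumOp W B

def EnumEq (A B : Set ℕ) : Prop := EnumRed A B ∧ EnumRed B A

def WeStd (e : ℕ) : Set ℕ := {x | ((Denumerable.ofNat Nat.Partrec.Code e).eval x).Dom}

def PhiStd (e : ℕ) : Set ℕ → Set ℕ := enumOp (WeStd e)

def pgraph (φ : ℕ →. ℕ) : Set ℕ := {n | n.unpair.2 ∈ φ n.unpair.1}

def peRed (φ ψ : ℕ →. ℕ) : Prop := EnumRed (pgraph φ) (pgraph ψ)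

def pfAdd (φ ψ : ℕ →. ℕ) : ℕ →. ℕ := fun n => if n % 2 = 0 then φ (n / 2) else ψ (n / 2)

def pfCons (i : ℕ) (φ : ℕ →. ℕ) : ℕ →. ℕ := fun n => if n = 0 then Part.some i else φ (n - 1)

abbrev MassPb := Set (ℕ →. ℕ)

def mpPlus (A B : MassPb) : MassPb := {h | ∃ φ ∈ A, ∃ ψ ∈ B, h = pfAdd φ ψ}

def mpCons (i : ℕ) (A : MassPb) : MassPb := pfCons i '' A

def mpWedge (A B : MassPb) : MassPb := mpCons 0 A ∪ mpCons 1 B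

def mpArrow (A B : MassPb) : MassPb :=
  {h | ∃ e φ, h = pfCons e φ ∧ ∀ ψ ∈ A, ∃ χ ∈ B, pgraph χ = PhiStd e (pgraph (pfAdd φ ψ))}

def DRed (A B : MassPb) : Prop :=
  ∃ W, CE W ∧ ∀ ψ ∈ B, ∃ χ ∈ A, pgraph χ = enumOp W (pgraph ψ)

def DEq (A B : MassPb) : Prop := DRed A B ∧ DRed B A

def DwRed (A B : MassPb) : Prop := ∀ ψ ∈ B, ∃ φ ∈ A, peRed φ ψ

def DwEq (A B : MassPb) : Prop := DwRed A B ∧ DwRed B A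

def UpClosedE (A : MassPb) : Prop := ∀ φ ψ, φ ∈ A → peRed φ ψ → ψ ∈ A

def DMProblem (A : MassPb) : Prop := A.Nonempty ∧ UpClosedE A

def PartCompFn (φ : ℕ →. ℕ) : Prop := CE (pgraph φ)

def oplus (A B : Set ℕ) : Set ℕ := (fun x => 2*x) '' A ∪ (fun x => 2*x+1) '' B

/-- A collection of subsets of `ℕ` is downwards `≤ₑ`-closed. -/
def DownClosedE (I : Set (Set ℕ)) : Prop := ∀ X Y : Set ℕ, EnumRed X Y → Y ∈ I → X ∈ I

/-- A splitting class of sets under enumeration reducibility. -/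
def SplittingClassE (I : Set (Set ℕ)) : Prop :=
  I.Countable ∧ DownClosedE I ∧
  ∀ A ∈ I, ∀ Bs : Set (Set ℕ), Bs.Finite → Bs ⊆ I → (∀ B ∈ Bs, ¬ EnumRed B A) →
    ∃ C ∈ I, EnumRed A C ∧ ¬ EnumRed C A ∧ ∀ B ∈ Bs, oplus B C ∉ I

/-- `K_X = {e : e ∈ Φ_e(X)}`. -/
def Kset (X : Set ℕ) : Set ℕ := {e | e ∈ PhiStd e X}

/-- The enumeration jump `J_e(X) = K_X ⊕ (K_X)ᶜ`. -/
def Je (X : Set ℕ) : Set ℕ := oplus (Kset X) (Kset X)ᶜ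

/-- `X` is e-low: `J_e(X) ≡ₑ J_e(∅)`. -/
def ELow (X : Set ℕ) : Prop := EnumEq (Je X) (Je ∅)

/-! ### Predicates enumerable from a set -/

section
variable {α β : Type} [Primcodable α] [Primcodable β]

/-- The predicate `p` is enumerable from positive information about `B`: `p a` holds iff some
witness `w` satisfies a primitive recursive condition and the finite list `L a w` is contained
in `B`. For `p = (· ∈ A)` this is `A ≤_e B`, see `enumRed_iff`. -/
def EIn (B : Set ℕ) (p : α → Prop) : Prop :=
  ∃ (R : α → ℕ → Prop) (L : α → ℕ → List ℕ), PrimrecRel R ∧ Primrec₂ L ∧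
    ∀ a, p a ↔ ∃ w, R a w ∧ ∀ i ∈ L a w, i ∈ B

open Primrec in
/-- Witnesses may range over any `Primcodable` type. -/
theorem EIn.of_witness {B : Set ℕ} {p : α → Prop} (R : α → β → Prop) (L : α → β → List ℕ)
    (hR : PrimrecRel R) (hL : Primrec₂ L)
    (h : ∀ a, p a ↔ ∃ w, R a w ∧ ∀ i ∈ L a w, i ∈ B) : EIn B p := by
  classical
  replace hR : Primrec₂ fun a b => decide (R a b) := hR.decide
  refine ⟨fun a n => (((Encodable.decode n : Option β).map
      (fun b => decide (R a b))).getD false) = true,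
    fun a n => ((Encodable.decode n : Option β).map (fun b => L a b)).getD [], ?_, ?_, ?_⟩
  · refine Primrec.eq.comp (f := fun q : α × ℕ => (((Encodable.decode q.2 : Option β).map
      (fun b => decide (R q.1 b))).getD false)) ?_ (const true)
    refine option_getD.comp (option_map (Primrec.decode.comp snd) ?_) (const false)
    exact hR.comp (fst.comp fst) snd
  · refine option_getD.comp (option_map (Primrec.decode.comp snd) ?_) (const [])
    exact hL.comp (fst.comp fst) snd
  · intro a
    rw [h]
    constructor
    · rintro ⟨w, h1, h2⟩
      exact ⟨Encodable.encode w, by simpa using h1, by simpa using h2⟩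
    · rintro ⟨n, h1, h2⟩
      rcases hd : (Encodable.decode n : Option β) with _ | w
      · simp [hd] at h1
      · exact ⟨w, by simpa [hd] using h1, by simpa [hd] using h2⟩

theorem EIn.congr {B : Set ℕ} {p q : α → Prop} (hp : EIn B p) (h : ∀ a, q a ↔ p a) : EIn B q := by
  obtain ⟨R, L, hR, hL, hh⟩ := hp
  exact ⟨R, L, hR, hL, fun a => (h a).trans (hh a)⟩

theorem EIn.of_primrec {B : Set ℕ} {p : α → Prop} (hp : PrimrecPred p) : EIn B p :=
  EIn.of_witness (β := Unit) (fun a _ => p a) (fun _ _ => []) (hp.comp Primrec.fst)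
    (Primrec.const []) (by simp)

theorem EIn.self (B : Set ℕ) : EIn B (fun n : ℕ => n ∈ B) :=
  EIn.of_witness (β := Unit) (fun _ _ => True) (fun n _ => [n])
    ((Primrec.eq.comp (Primrec.const 0) (Primrec.const 0)).of_eq (by simp))
    (Primrec.list_cons.comp Primrec.fst (Primrec.const [])) (by simp)

theorem EIn.comp {B : Set ℕ} {p : β → Prop} {f : α → β} (hp : EIn B p) (hf : Primrec f) :
    EIn B (fun a => p (f a)) := by
  obtain ⟨R, L, hR, hL, hh⟩ := hp
  exact ⟨fun a w => R (f a) w, fun a w => L (f a) w,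
    hR.comp (hf.comp Primrec.fst) Primrec.snd,
    hL.comp (hf.comp Primrec.fst) Primrec.snd, fun a => hh (f a)⟩

open Primrec in
theorem EIn.and {B : Set ℕ} {p q : α → Prop} (hp : EIn B p) (hq : EIn B q) :
    EIn B (fun a => p a ∧ q a) := by
  obtain ⟨R, L, hR, hL, hh⟩ := hp
  obtain ⟨R', L', hR', hL', hh'⟩ := hq
  refine EIn.of_witness (β := ℕ × ℕ) (fun a w => R a w.1 ∧ R' a w.2)
    (fun a w => L a w.1 ++ L' a w.2) ?_ ?_ ?_
  · exact (hR.comp fst (fst.comp snd)).and (hR'.comp fst (snd.comp snd))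
  · exact list_append.comp (hL.comp fst (fst.comp snd)) (hL'.comp fst (snd.comp snd))
  · intro a
    simp only [hh, hh', List.mem_append, Prod.exists]
    constructor
    · rintro ⟨⟨w, h1, h2⟩, w', h1', h2'⟩
      exact ⟨w, w', ⟨h1, h1'⟩, fun i hi => hi.elim (h2 i) (h2' i)⟩
    · rintro ⟨w, w', ⟨h1, h1'⟩, h⟩
      exact ⟨⟨w, h1, fun i hi => h i (.inl hi)⟩, w', h1', fun i hi => h i (.inr hi)⟩

open Primrec in
theorem EIn.exists {B : Set ℕ} {p : α × β → Prop} (hp : EIn B p) :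
    EIn B (fun a => ∃ b, p (a, b)) := by
  obtain ⟨R, L, hR, hL, hh⟩ := hp
  refine EIn.of_witness (β := β × ℕ) (fun a w => R (a, w.1) w.2) (fun a w => L (a, w.1) w.2)
    ?_ ?_ ?_
  · exact hR.comp (pair fst (fst.comp snd)) (snd.comp snd)
  · exact hL.comp (pair fst (fst.comp snd)) (snd.comp snd)
  · intro a
    simp only [hh, Prod.exists]

open Primrec in
theorem EIn.or {B : Set ℕ} {p q : α → Prop} (hp : EIn B p) (hq : EIn B q) :
    EIn B (fun a => p a ∨ q a) := by
  obtain ⟨R, L, hR, hL, hh⟩ := hp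
  obtain ⟨R', L', hR', hL', hh'⟩ := hq
  refine EIn.of_witness (β := Bool × ℕ)
    (fun a w => (w.1 = true ∧ R a w.2) ∨ (w.1 = false ∧ R' a w.2))
    (fun a w => bif w.1 then L a w.2 else L' a w.2) ?_ ?_ ?_
  · exact ((Primrec.eq.comp (fst.comp snd) (const true)).and (hR.comp fst (snd.comp snd))).or
      ((Primrec.eq.comp (fst.comp snd) (const false)).and (hR'.comp fst (snd.comp snd)))
  · exact Primrec.cond (fst.comp snd) (hL.comp fst (snd.comp snd)) (hL'.comp fst (snd.comp snd))
  · intro a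
    simp [hh, hh', Prod.exists, or_comm]

/-- A witness for the bounded quantifier is the given list, each entry paired with a witness
of its own. -/
theorem EIn.forall_mem {B : Set ℕ} {p : α → Prop} (hp : EIn B p) :
    EIn B (fun l : List α => ∀ a ∈ l, p a) := by
  obtain ⟨R, L, hR, hL, hh⟩ := hp
  refine EIn.of_witness (β := List (α × ℕ))
    (fun l z => z.map Prod.fst = l ∧ ∀ q ∈ z, R q.1 q.2)
    (fun _ z => z.flatMap fun q => L q.1 q.2) ?_ ?_ ?_
  · refine PrimrecPred.and ?_ ?_
    · exact Primrec.eq.comp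
        (Primrec.list_map Primrec.snd (Primrec.fst.comp Primrec.snd)) Primrec.fst
    · exact (PrimrecPred.forall_mem_list hR).comp Primrec.snd
  · exact Primrec.list_flatMap Primrec.snd
      (hL.comp (Primrec.fst.comp Primrec.snd) (Primrec.snd.comp Primrec.snd))
  · intro l
    constructor
    · intro h
      choose! w hw using fun a ha => (hh a).1 (h a ha)
      refine ⟨l.map fun a => (a, w a), ⟨by simp [Function.comp_def], ?_⟩, ?_⟩
      · simp only [List.mem_map]
        rintro _ ⟨a, ha, rfl⟩
        exact (hw a ha).1
      · simp only [List.mem_flatMap, List.mem_map]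
        rintro i ⟨_, ⟨a, ha, rfl⟩, hi⟩
        exact (hw a ha).2 i hi
    · rintro ⟨z, ⟨rfl, h1⟩, h2⟩ a ha
      obtain ⟨q, hq, rfl⟩ := List.mem_map.1 ha
      exact (hh _).2 ⟨q.2, h1 q hq, fun i hi => h2 i (List.mem_flatMap.2 ⟨q, hq, hi⟩)⟩

theorem EIn.trans {A B : Set ℕ} {p : α → Prop} (hp : EIn A p) (hA : EIn B (fun n : ℕ => n ∈ A)) :
    EIn B p := by
  obtain ⟨R, L, hR, hL, hh⟩ := hp
  have h1 : EIn B (fun q : α × ℕ => R q.1 q.2 ∧ ∀ i ∈ L q.1 q.2, i ∈ A) :=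
    (EIn.of_primrec hR).and (hA.forall_mem.comp hL)
  exact h1.exists.congr hh

/-! ### Agreement with enumeration operators -/

theorem primrec_two_pow : Primrec fun n : ℕ => 2 ^ n := by
  have h : Primrec₂ ((· ^ ·) : ℕ → ℕ → ℕ) := Primrec₂.unpaired'.1 Nat.Primrec.pow
  exact h.comp (Primrec.const 2) Primrec.id

open Primrec in
theorem primrec_testBit : PrimrecRel fun u i : ℕ => Nat.testBit u i = true := by
  have h : PrimrecRel fun u i : ℕ => u / 2 ^ i % 2 = 1 :=
    Primrec.eq.comp (nat_mod.comp (nat_div.comp fst (primrec_two_pow.comp snd)) (const 2))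
      (const 1)
  exact h.of_eq fun u i => by simp [Nat.testBit_eq_decide_div_mod_eq]

/-- The increasing list of the elements of `Dset u`. -/
def bits (u : ℕ) : List ℕ := (List.range u).filter fun i => u.testBit i

theorem mem_bits {u i : ℕ} : i ∈ bits u ↔ u.testBit i = true := by
  simp only [bits, List.mem_filter, List.mem_range, and_iff_right_iff_imp]
  intro h
  exact Nat.lt_of_lt_of_le Nat.lt_two_pow_self (Nat.ge_two_pow_of_testBit h)

theorem primrec_bits : Primrec bits := by
  have h := PrimrecRel.listFilter (R := fun i u : ℕ => Nat.testBit u i = true) primrec_testBit.swap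
  exact (h.comp Primrec.list_range Primrec.id).of_eq fun u => by simp [bits]

theorem Dset_subset {u : ℕ} {A : Set ℕ} : Dset u ⊆ A ↔ ∀ i ∈ bits u, i ∈ A := by
  simp only [mem_bits]; rfl

theorem exists_Dset (l : List ℕ) : ∃ u, ∀ i, i ∈ Dset u ↔ i ∈ l := by
  induction l with
  | nil => exact ⟨0, by simp [Dset]⟩
  | cons a l ih =>
    obtain ⟨u, hu⟩ := ih
    refine ⟨2 ^ a ||| u, fun i => ?_⟩
    have := hu i
    simp only [Dset, Set.mem_ofPred_eq] at this ⊢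
    simp only [Nat.testBit_or, Bool.or_eq_true, this, Nat.testBit_two_pow, decide_eq_true_eq,
      List.mem_cons, eq_comm (a := a)]

/-- The universal normal form: `x ∈ Φ_e(X)` is enumerable from `X`, uniformly in `e`. -/
theorem EIn.phi (X : Set ℕ) : EIn X (fun q : ℕ × ℕ => q.2 ∈ PhiStd q.1 X) := by
  refine EIn.of_witness (β := ℕ × ℕ)
    (fun q w => ((Nat.Partrec.Code.evaln w.1 (Denumerable.ofNat Nat.Partrec.Code q.1)
      (Nat.pair q.2 w.2)).isSome) = true) (fun _ w => bits w.2) ?_ ?_ ?_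
  · refine Primrec.eq.comp (Primrec.option_isSome.comp (Nat.Partrec.Code.primrec_evaln.comp
      (((Primrec.fst.comp Primrec.snd).pair ((Primrec.ofNat _).comp
        (Primrec.fst.comp Primrec.fst))).pair
        (Primrec₂.natPair.comp (Primrec.snd.comp Primrec.fst) (Primrec.snd.comp Primrec.snd)))))
        (Primrec.const true)
  · exact primrec_bits.comp (Primrec.snd.comp Primrec.snd)
  · rintro ⟨e, x⟩
    simp only [PhiStd, enumOp, WeStd, Set.mem_ofPred_eq, Dset_subset, Part.dom_iff_mem,
      Nat.Partrec.Code.evaln_complete, Option.isSome_iff_exists, Prod.exists]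
    constructor
    · rintro ⟨u, ⟨y, k, h⟩, h'⟩
      exact ⟨k, u, ⟨y, h⟩, h'⟩
    · rintro ⟨k, u, ⟨y, h⟩, h'⟩
      exact ⟨u, ⟨y, k, h⟩, h'⟩

theorem CE.exists_index {W : Set ℕ} (h : CE W) : ∃ e, W = WeStd e := by
  obtain ⟨f, hf, rfl⟩ := h
  obtain ⟨c, rfl⟩ := Nat.Partrec.Code.exists_code.1 (Partrec.nat_iff.1 hf)
  refine ⟨Encodable.encode c, ?_⟩
  ext x
  simp [WeStd, PFun.mem_dom, Part.dom_iff_mem]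

theorem ce_of_primrec {R : ℕ → ℕ → Prop} (hR : PrimrecRel R) : CE {n | ∃ w, R n w} := by
  classical
  replace hR : Primrec₂ fun a b => decide (R a b) := hR.decide
  refine ⟨fun n => Nat.rfind fun w => Part.some (decide (R n w)),
    Partrec.rfind hR.to_comp.partrec₂, ?_⟩
  ext n
  refine Iff.trans ?_ (Nat.rfind_dom (p := fun w => Part.some (decide (R n w)))).symm
  simp [Part.some_dom]

/-- The pairs defining an enumeration operator form a c.e. set: `f n` is the point to be enumerated,
`g n` codes a finite set containing all positive conditions of some witness for `f n`. -/
theorem ce_witness {R : ℕ → ℕ → Prop} {L : ℕ → ℕ → List ℕ} (hR : PrimrecRel R)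
    (hL : Primrec₂ L) {f g : ℕ → ℕ} (hf : Primrec f) (hg : Primrec g) :
    CE {n | ∃ w, R (f n) w ∧ ∀ i ∈ L (f n) w, i ∈ Dset (g n)} := by
  refine ce_of_primrec (R := fun n w => R (f n) w ∧ ∀ i ∈ L (f n) w, i ∈ Dset (g n)) ?_
  refine PrimrecPred.and (hR.comp (hf.comp Primrec.fst) Primrec.snd) ?_
  exact (PrimrecRel.forall_mem_list primrec_testBit.swap).comp
    (hL.comp (hf.comp Primrec.fst) Primrec.snd) (hg.comp Primrec.fst)

theorem exists_Dset_witness {R : ℕ → ℕ → Prop} {L : ℕ → ℕ → List ℕ} {B : Set ℕ} {n : ℕ} :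
    (∃ u, (∃ w, R n w ∧ ∀ i ∈ L n w, i ∈ Dset u) ∧ Dset u ⊆ B) ↔
      ∃ w, R n w ∧ ∀ i ∈ L n w, i ∈ B := by
  constructor
  · rintro ⟨u, ⟨w, h1, h2⟩, h3⟩
    exact ⟨w, h1, fun i hi => h3 (h2 i hi)⟩
  · rintro ⟨w, h1, h2⟩
    obtain ⟨u, hu⟩ := exists_Dset (L n w)
    exact ⟨u, ⟨w, h1, fun i hi => (hu i).2 hi⟩, fun i hi => h2 i ((hu i).1 hi)⟩

theorem enumRed_iff {A B : Set ℕ} : EnumRed A B ↔ EIn B (fun n : ℕ => n ∈ A) := by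
  constructor
  · rintro ⟨W, hW, rfl⟩
    obtain ⟨e, rfl⟩ := hW.exists_index
    exact (EIn.phi B).comp ((Primrec.const e).pair Primrec.id)
  · rintro ⟨R, L, hR, hL, h⟩
    refine ⟨_, ce_witness hR hL (Primrec.fst.comp Primrec.unpair)
      (Primrec.snd.comp Primrec.unpair), ?_⟩
    ext x
    simp only [h, enumOp, Set.mem_ofPred_eq, Nat.unpair_pair, exists_Dset_witness]

/-- Completeness of `K_X`: every predicate enumerable from `X` is many-one reducible to `K_X`. -/
theorem EIn.exists_reduction {X : Set ℕ} {p : ℕ → Prop} (hp : EIn X p) :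
    ∃ f : ℕ → ℕ, Primrec f ∧ ∀ n, p n ↔ f n ∈ Kset X := by
  obtain ⟨R, L, hR, hL, h⟩ := hp
  -- inputs have the form `⟨n, ⟨y, u⟩⟩`, and the output `y` is ignored
  obtain ⟨f, hf, hW⟩ := ce_witness hR hL (Primrec.fst.comp Primrec.unpair)
    (Primrec.snd.comp (Primrec.unpair.comp (Primrec.snd.comp Primrec.unpair)))
  obtain ⟨c, rfl⟩ := Nat.Partrec.Code.exists_code.1 (Partrec.nat_iff.1 hf)
  refine ⟨fun n => Encodable.encode (c.curry n),
    Primrec.encode.comp (Nat.Partrec.Code.primrec₂_curry.comp (Primrec.const c) Primrec.id), ?_⟩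
  intro n
  have key : ∀ y u, (c.eval (Nat.pair n (Nat.pair y u))).Dom ↔
      ∃ w, R n w ∧ ∀ i ∈ L n w, i ∈ Dset u := by
    intro y u
    have := Set.ext_iff.1 hW (Nat.pair n (Nat.pair y u))
    simp only [Set.mem_ofPred_eq, Nat.unpair_pair] at this
    rw [this, PFun.mem_dom, Part.dom_iff_mem]
  simp only [h, Kset, PhiStd, enumOp, WeStd, Set.mem_ofPred_eq, Denumerable.ofNat_encode,
    Nat.Partrec.Code.eval_curry, key, exists_Dset_witness]

end

/-! ### Jumps and lowness -/

theorem mem_oplus {A B : Set ℕ} {i : ℕ} :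
    i ∈ oplus A B ↔ (i % 2 = 0 ∧ i / 2 ∈ A) ∨ (i % 2 = 1 ∧ i / 2 ∈ B) := by
  constructor
  · rintro (⟨x, hx, rfl⟩ | ⟨x, hx, rfl⟩)
    · exact .inl ⟨by simp, by simpa using hx⟩
    · exact .inr ⟨by dsimp only; omega, by
        dsimp only; rwa [show (2 * x + 1) / 2 = x by omega]⟩
  · rintro (⟨h, hx⟩ | ⟨h, hx⟩)
    · exact .inl ⟨_, hx, by dsimp only; omega⟩
    · exact .inr ⟨_, hx, by dsimp only; omega⟩

theorem primrec_half : Primrec fun n : ℕ => n / 2 := Primrec.nat_div.comp .id (.const 2)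

theorem primrecPred_mod_two (k : ℕ) : PrimrecPred fun n : ℕ => n % 2 = k :=
  Primrec.eq.comp (Primrec.nat_mod.comp .id (.const 2)) (.const k)

theorem EIn.oplus {A B X : Set ℕ} (hA : EIn X (fun n : ℕ => n ∈ A))
    (hB : EIn X (fun n : ℕ => n ∈ B)) : EIn X (fun n : ℕ => n ∈ oplus A B) :=
  (((EIn.of_primrec (primrecPred_mod_two 0)).and (hA.comp primrec_half)).or
    ((EIn.of_primrec (primrecPred_mod_two 1)).and (hB.comp primrec_half))).congr
    fun _ => mem_oplus

theorem EIn.left (A B : Set ℕ) : EIn (_root_.oplus A B) (fun n : ℕ => n ∈ A) :=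
  ((EIn.self (_root_.oplus A B)).comp Primrec.nat_double).congr fun n => by
    simp [mem_oplus]

theorem EIn.right (A B : Set ℕ) : EIn (_root_.oplus A B) (fun n : ℕ => n ∈ B) :=
  ((EIn.self (_root_.oplus A B)).comp Primrec.nat_double_succ).congr fun n => by
    rw [mem_oplus, show (2 * n + 1) / 2 = n by omega]
    simp

theorem EIn.jump_pos {X : Set ℕ} {p : ℕ → Prop} (hp : EIn X p) : EIn (Je X) p := by
  obtain ⟨f, hf, h⟩ := hp.exists_reduction
  exact ((EIn.left _ _).comp hf).congr h

/-- The jump of `X` enumerates the complement of every set enumerable from `X`. -/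
theorem EIn.jump_neg {X : Set ℕ} {p : ℕ → Prop} (hp : EIn X p) :
    EIn (Je X) (fun n => ¬ p n) := by
  obtain ⟨f, hf, h⟩ := hp.exists_reduction
  exact ((EIn.right _ _).comp hf).congr fun n => by rw [h]; rfl

theorem EIn.kset (X : Set ℕ) : EIn X (fun n : ℕ => n ∈ Kset X) :=
  (EIn.phi X).comp (Primrec.id.pair Primrec.id)

theorem EIn.je_mono {X Y : Set ℕ} (h : EIn Y (fun n : ℕ => n ∈ X)) :
    EIn (Je Y) (fun n : ℕ => n ∈ Je X) :=
  ((EIn.kset X).trans h).jump_pos.oplus ((EIn.kset X).trans h).jump_neg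

theorem EIn.empty (X : Set ℕ) : EIn X (fun n : ℕ => n ∈ (∅ : Set ℕ)) :=
  (EIn.of_primrec ((Primrec.eq.comp (Primrec.const 0) (Primrec.const 1)).of_eq
    (by simp : ∀ n : ℕ, (0 = 1) ↔ n ∈ (∅ : Set ℕ))))

theorem elow_iff {X : Set ℕ} : ELow X ↔ EIn (Je ∅) (fun n : ℕ => n ∈ Je X) :=
  ⟨fun h => enumRed_iff.1 h.1, fun h => ⟨enumRed_iff.2 h, enumRed_iff.2 (EIn.empty X).je_mono⟩⟩

theorem ELow.mono {X Y : Set ℕ} (hY : ELow Y) (h : EIn Y (fun n : ℕ => n ∈ X)) : ELow X :=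
  elow_iff.2 (h.je_mono.trans (elow_iff.1 hY))

theorem elow_empty : ELow ∅ := elow_iff.2 (EIn.self _)

theorem ce_iff {X : Set ℕ} : CE X ↔ EIn ∅ (fun n : ℕ => n ∈ X) := by
  constructor
  · intro h
    rw [← enumRed_iff]
    refine ⟨{n | n.unpair.1 ∈ X}, ?_, ?_⟩
    · obtain ⟨f, hf, rfl⟩ := h
      exact ⟨fun n => f n.unpair.1, hf.comp (Primrec.fst.comp Primrec.unpair).to_comp, rfl⟩
    · ext x
      simp only [enumOp, Set.mem_ofPred_eq, Nat.unpair_pair]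
      exact ⟨fun h => ⟨0, h, fun i hi => by simp [Dset] at hi⟩, fun ⟨_, h, _⟩ => h⟩
  · rintro ⟨R, L, hR, hL, h⟩
    have h1 := ce_of_primrec (R := fun n w => R n w ∧ L n w = [])
      (hR.and (Primrec.eq.comp hL (Primrec.const [])))
    convert h1 using 1
    ext n
    simp [h, List.eq_nil_iff_forall_not_mem]

/-! ### Kalimullin pairs -/

/-- `A` and `B` form a Kalimullin pair by means of `U`: all of `A × B` is inside `U` and all of
`Aᶜ × Bᶜ` is outside `U`. In general `U` may be c.e.; a primitive recursive `U` suffices here. -/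
structure KPair (U : ℕ → ℕ → Prop) (A B : Set ℕ) : Prop where
  prim : PrimrecRel U
  pos : ∀ a ∈ A, ∀ b ∈ B, U a b
  neg : ∀ a ∉ A, ∀ b ∉ B, ¬ U a b

theorem KPair.symm {U : ℕ → ℕ → Prop} {A B : Set ℕ} (h : KPair U A B) :
    KPair (fun b a => U a b) B A :=
  ⟨h.prim.swap, fun b hb a ha => h.pos a ha b hb, fun b hb a ha => h.neg a ha b hb⟩

/-- Let `D = K_{A ⊕ C}` and let `V(x, b)` say that `x` is enumerated into `D` when `A` is replaced
by its approximation `{a | U a b}`. This approximation contains `A` if `b ∈ B` and is contained in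
`A` if `b ∉ B`; hence `{b | V(x, b)} ⊆ B` for `x ∉ D`, and the inclusion is proper because
`B ≰_e C`. So `x ∉ D` iff some `b ∈ B` has `¬ V(x, b)`, and this is enumerable from `J_e(∅)`. -/
theorem KPair.elow {U : ℕ → ℕ → Prop} {A B C : Set ℕ} (h : KPair U A B)
    (hA : EIn (Je ∅) (fun n : ℕ => n ∈ A)) (hB : EIn (Je ∅) (fun n : ℕ => n ∈ B))
    (hC : ELow C) (hBC : ¬ EIn C (fun n : ℕ => n ∈ B)) : ELow (oplus A C) := by
  rw [elow_iff] at hC ⊢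
  have hC' : EIn (Je ∅) (fun n : ℕ => n ∈ C) := (EIn.self C).jump_pos.trans hC
  refine ((EIn.kset _).trans (hA.oplus hC')).oplus ?_
  obtain ⟨R, L, hR, hL, hD⟩ := EIn.kset (_root_.oplus A C)
  let V : ℕ × ℕ → Prop := fun q =>
    ∃ w, R q.1 w ∧ ∀ i ∈ L q.1 w, i ∈ _root_.oplus {a | U a q.2} C
  have hV : EIn C V := by
    have h1 : EIn C (fun q : ℕ × ℕ => q.2 ∈ _root_.oplus {a | U a q.1} C) := by
      refine EIn.congr (((EIn.of_primrec ((primrecPred_mod_two 0).comp Primrec.snd)).and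
        (EIn.of_primrec (h.prim.comp (primrec_half.comp Primrec.snd) Primrec.fst))).or
        ((EIn.of_primrec ((primrecPred_mod_two 1).comp Primrec.snd)).and
        ((EIn.self C).comp (primrec_half.comp Primrec.snd)))) fun q => mem_oplus
    have h2 : EIn C (fun q : (ℕ × ℕ) × ℕ => R q.1.1 q.2 ∧
        ∀ c ∈ (L q.1.1 q.2).map (fun i => (q.1.2, i)), c.2 ∈ _root_.oplus {a | U a c.1} C) := by
      refine (EIn.of_primrec (hR.comp (Primrec.fst.comp Primrec.fst) Primrec.snd)).and
        (h1.forall_mem.comp (Primrec.list_map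
          (hL.comp (Primrec.fst.comp Primrec.fst) Primrec.snd) ?_))
      exact Primrec.pair (Primrec.snd.comp (Primrec.fst.comp Primrec.fst)) Primrec.snd
    exact h2.exists.congr fun q => by simp [V]
  have hle : ∀ b ∈ B, ∀ x ∈ Kset (_root_.oplus A C), V (x, b) := by
    intro b hb x hx
    obtain ⟨w, hw, hi⟩ := (hD x).1 hx
    refine ⟨w, hw, fun i hiL => ?_⟩
    have := hi i hiL
    rw [mem_oplus] at this ⊢
    exact this.imp_left fun h' => ⟨h'.1, h.pos _ h'.2 b hb⟩
  have hge : ∀ b ∉ B, ∀ x, V (x, b) → x ∈ Kset (_root_.oplus A C) := by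
    rintro b hb x ⟨w, hw, hi⟩
    refine (hD x).2 ⟨w, hw, fun i hiL => ?_⟩
    have := hi i hiL
    rw [mem_oplus] at this ⊢
    exact this.imp_left fun h' => ⟨h'.1, by_contra fun hn => h.neg _ hn b hb h'.2⟩
  have hnV : EIn (Je ∅) (fun q : ℕ × ℕ => ¬ V q) := by
    have h1 : EIn C (fun n : ℕ => V n.unpair) := hV.comp Primrec.unpair
    exact ((h1.jump_neg.trans hC).comp (Primrec₂.natPair.comp Primrec.fst Primrec.snd)).congr
      fun q => by simp
  refine EIn.congr ((hB.comp Primrec.snd).and hnV).exists fun x => ?_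
  constructor
  · intro hx
    by_contra hcon
    refine hBC ((hV.comp ((Primrec.const x).pair Primrec.id)).congr fun b => ?_)
    exact ⟨fun hb => by_contra fun hn => hcon ⟨b, hb, hn⟩,
      fun hb => by_contra fun hn => hx (hge b hn x hb)⟩
  · rintro ⟨b, hb, hn⟩ hx
    exact hn (hle b hb x hx)

theorem KPair.elow_left {U : ℕ → ℕ → Prop} {A B : Set ℕ} (h : KPair U A B)
    (hA : EIn (Je ∅) (fun n : ℕ => n ∈ A)) (hB : EIn (Je ∅) (fun n : ℕ => n ∈ B))
    (hce : ¬ CE B) : ELow A :=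
  (h.elow hA hB elow_empty (mt ce_iff.2 hce)).mono (EIn.left A ∅)

/-! ### A dyadic cut computable from the jump -/

/-- The decision taken at stage `n` about the dyadic point coded by `x`: to put it into the cut
iff it is outside `W_e` when `n = 2e`, and iff it is in `W_e` when `n = 2e + 1`. -/
def Bit (n x : ℕ) : Prop :=
  (n % 2 = 0 ∧ x ∉ WeStd (n / 2)) ∨ (n % 2 = 1 ∧ x ∈ WeStd (n / 2))

open Classical in
/-- After `n` stages the cut is confined to the dyadic interval
`[cutNum n / 2 ^ n, (cutNum n + 1) / 2 ^ n)`; stage `n` decides about its midpoint. -/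
noncomputable def cutNum : ℕ → ℕ
  | 0 => 0
  | n + 1 => 2 * cutNum n + if Bit n (Nat.pair (2 * cutNum n + 1) (n + 1)) then 1 else 0

/-- The lower cut: the codes `⟨m, n⟩` of the dyadic rationals `m / 2 ^ n` that are at most the
left end of the interval reached after `n` stages. -/
def cut : Set ℕ := {x | x.unpair.1 ≤ cutNum x.unpair.2}

/-- `⟨m, n⟩ < ⟨m', n'⟩` as dyadic rationals. -/
def dyadicLt (a b : ℕ) : Prop :=
  a.unpair.1 * 2 ^ b.unpair.2 < b.unpair.1 * 2 ^ a.unpair.2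

theorem cutNum_bounds (n k : ℕ) :
    cutNum n * 2 ^ k ≤ cutNum (n + k) ∧ cutNum (n + k) < (cutNum n + 1) * 2 ^ k := by
  induction k with
  | zero => simp
  | succ k ih =>
    rw [← Nat.add_assoc, cutNum, pow_succ, ← Nat.mul_assoc, ← Nat.mul_assoc]
    split <;> omega

theorem cutNum_lt (n n' : ℕ) : cutNum n * 2 ^ n' < (cutNum n' + 1) * 2 ^ n := by
  rcases le_total n n' with h | h
  · obtain ⟨k, rfl⟩ := Nat.exists_eq_add_of_le h
    have := (cutNum_bounds n k).1
    calc cutNum n * 2 ^ (n + k) = (cutNum n * 2 ^ k) * 2 ^ n := by ring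
      _ < _ := Nat.mul_lt_mul_of_pos_right (by omega) (by positivity)
  · obtain ⟨k, rfl⟩ := Nat.exists_eq_add_of_le h
    have := (cutNum_bounds n' k).2
    calc cutNum (n' + k) * 2 ^ n' < ((cutNum n' + 1) * 2 ^ k) * 2 ^ n' :=
          Nat.mul_lt_mul_of_pos_right this (by positivity)
      _ = _ := by ring

theorem dyadicLt_of_cut {a b : ℕ} (ha : a ∈ cut) (hb : b ∉ cut) : dyadicLt a b := by
  have ha' : a.unpair.1 ≤ cutNum a.unpair.2 := ha
  have hb' : cutNum b.unpair.2 + 1 ≤ b.unpair.1 := Nat.lt_of_not_le hb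
  calc a.unpair.1 * 2 ^ b.unpair.2 ≤ cutNum a.unpair.2 * 2 ^ b.unpair.2 :=
        Nat.mul_le_mul_right _ ha'
    _ < (cutNum b.unpair.2 + 1) * 2 ^ a.unpair.2 := cutNum_lt _ _
    _ ≤ _ := Nat.mul_le_mul_right _ hb'

open Primrec in
theorem kpair_cut : KPair dyadicLt cut cutᶜ where
  prim := by
    have h1 : Primrec fun q : ℕ × ℕ => q.1.unpair.1 * 2 ^ q.2.unpair.2 :=
      nat_mul.comp (fst.comp (unpair.comp fst))
        (primrec_two_pow.comp (snd.comp (unpair.comp snd)))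
    exact nat_lt.comp h1 (h1.comp (pair snd fst))
  pos a ha b hb := dyadicLt_of_cut ha hb
  neg a ha b hb := Nat.lt_asymm (dyadicLt_of_cut (by simpa using hb) ha)

theorem mem_cut_iff_bit (n : ℕ) :
    Nat.pair (2 * cutNum n + 1) (n + 1) ∈ cut ↔ Bit n (Nat.pair (2 * cutNum n + 1) (n + 1)) := by
  simp only [cut, Set.mem_ofPred_eq, Nat.unpair_pair, cutNum]
  split <;> simp_all

theorem not_ce_cut : ¬ CE cut := by
  intro h
  obtain ⟨e, he⟩ := h.exists_index
  have := mem_cut_iff_bit (2 * e)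
  simp [Bit, ← he] at this

theorem not_ce_compl_cut : ¬ CE cutᶜ := by
  intro h
  obtain ⟨e, he⟩ := h.exists_index
  have := mem_cut_iff_bit (2 * e + 1)
  rw [Bit, show (2 * e + 1) / 2 = e by omega, ← he] at this
  simp at this

theorem EIn.bit : EIn (Je ∅) (fun q : ℕ × ℕ => Bit q.1 q.2) ∧
    EIn (Je ∅) (fun q : ℕ × ℕ => ¬ Bit q.1 q.2) := by
  have hW : EIn ∅ (fun n : ℕ => n.unpair.2 ∈ WeStd n.unpair.1) := by
    refine (ce_iff (X := {n : ℕ | n.unpair.2 ∈ WeStd n.unpair.1})).1 ?_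
    exact ⟨_, Nat.Partrec.Code.eval_part.comp
      ((Primrec.ofNat _).comp (Primrec.fst.comp Primrec.unpair)).to_comp
      (Primrec.snd.comp Primrec.unpair).to_comp, rfl⟩
  have hc : Primrec fun q : ℕ × ℕ => Nat.pair (q.1 / 2) q.2 :=
    Primrec₂.natPair.comp (primrec_half.comp Primrec.fst) Primrec.snd
  have hp : EIn (Je ∅) (fun q : ℕ × ℕ => q.2 ∈ WeStd (q.1 / 2)) :=
    (hW.jump_pos.comp hc).congr fun q => by simp
  have hn : EIn (Je ∅) (fun q : ℕ × ℕ => q.2 ∉ WeStd (q.1 / 2)) :=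
    (hW.jump_neg.comp hc).congr fun q => by simp
  have h0 (k : ℕ) : EIn (Je ∅) (fun q : ℕ × ℕ => q.1 % 2 = k) :=
    EIn.of_primrec ((primrecPred_mod_two k).comp Primrec.fst)
  refine ⟨((h0 0).and hn).or ((h0 1).and hp), (((h0 0).and hp).or ((h0 1).and hn)).congr ?_⟩
  rintro ⟨n, x⟩
  rcases Nat.mod_two_eq_zero_or_one n with h | h <;> simp [Bit, h]

/-- The one-step relation of the recursion defining `cutNum`. -/
def Step (n v v' : ℕ) : Prop :=
  (v' = 2 * v + 1 ∧ Bit n (Nat.pair (2 * v + 1) (n + 1))) ∨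
    (v' = 2 * v ∧ ¬ Bit n (Nat.pair (2 * v + 1) (n + 1)))

theorem step_iff {n v' : ℕ} : Step n (cutNum n) v' ↔ v' = cutNum (n + 1) := by
  rw [cutNum, Step]
  split <;> simp [*]

open Primrec in
theorem EIn.step : EIn (Je ∅) (fun q : ℕ × ℕ × ℕ => Step q.1 q.2.1 q.2.2) := by
  have hv : Primrec fun q : ℕ × ℕ × ℕ => 2 * q.2.1 + 1 := nat_double_succ.comp (fst.comp snd)
  have hx : Primrec fun q : ℕ × ℕ × ℕ => (q.1, Nat.pair (2 * q.2.1 + 1) (q.1 + 1)) :=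
    pair fst (Primrec₂.natPair.comp hv (succ.comp fst))
  exact ((EIn.of_primrec (Primrec.eq.comp (snd.comp snd) hv)).and (EIn.bit.1.comp hx)).or
    ((EIn.of_primrec (Primrec.eq.comp (snd.comp snd) (nat_double.comp (fst.comp snd)))).and
      (EIn.bit.2.comp hx))

/-- The graph of `cutNum` through finite histories `s` of the recursion up to stage `n`; this form
turns the recursion into an enumeration from the jump. -/
theorem cutNum_eq_iff (n v : ℕ) : v = cutNum n ↔ ∃ s : List ℕ, (s.getD 0 0 = 0 ∧ s.getD n 0 = v) ∧
    ∀ i ∈ List.range n, Step i (s.getD i 0) (s.getD (i + 1) 0) := by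
  constructor
  · rintro rfl
    have hs : ∀ i ≤ n, ((List.range (n + 1)).map cutNum).getD i 0 = cutNum i := by
      intro i hi
      simp [List.getD, List.getElem?_range (show i < n + 1 by omega)]
    refine ⟨(List.range (n + 1)).map cutNum, ⟨hs 0 (Nat.zero_le _), hs n le_rfl⟩, ?_⟩
    intro i hi
    rw [List.mem_range] at hi
    rw [hs i hi.le, hs (i + 1) hi]
    exact step_iff.2 rfl
  · rintro ⟨s, ⟨h0, rfl⟩, hs⟩
    have : ∀ i ≤ n, s.getD i 0 = cutNum i := by
      intro i
      induction i with
      | zero => exact fun _ => h0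
      | succ i ih =>
        intro hi
        have := hs i (List.mem_range.2 hi)
        rw [ih (by omega)] at this
        exact step_iff.1 this
    exact this n le_rfl

open Primrec in
theorem EIn.cutNum : EIn (Je ∅) (fun q : ℕ × ℕ => q.2 = cutNum q.1) := by
  have hget : Primrec₂ fun (l : List ℕ) n => l.getD n 0 := list_getD 0
  have h1 : EIn (Je ∅) (fun q : (ℕ × ℕ) × List ℕ =>
      q.2.getD 0 0 = 0 ∧ q.2.getD q.1.1 0 = q.1.2) :=
    EIn.of_primrec ((Primrec.eq.comp (hget.comp snd (const 0)) (const 0)).and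
      (Primrec.eq.comp (hget.comp snd (fst.comp fst)) (snd.comp fst)))
  have h2 : EIn (Je ∅) (fun q : (ℕ × ℕ) × List ℕ =>
      ∀ c ∈ (List.range q.1.1).map (fun i => (i, q.2.getD i 0, q.2.getD (i + 1) 0)),
        Step c.1 c.2.1 c.2.2) := by
    refine EIn.step.forall_mem.comp (list_map (list_range.comp (fst.comp fst)) ?_)
    exact pair snd (pair (hget.comp (snd.comp fst) snd)
      (hget.comp (snd.comp fst) (succ.comp snd)))
  refine (h1.and h2).exists.congr fun q => ?_
  rw [cutNum_eq_iff]
  simp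

open Primrec in
theorem EIn.cut : EIn (Je ∅) (fun n : ℕ => n ∈ cut) ∧ EIn (Je ∅) (fun n : ℕ => n ∈ cutᶜ) := by
  have h1 : EIn (Je ∅) (fun q : ℕ × ℕ => q.2 = _root_.cutNum q.1.unpair.2) :=
    EIn.cutNum.comp (pair (snd.comp (unpair.comp fst)) snd)
  have h2 : PrimrecPred fun q : ℕ × ℕ => q.1.unpair.1 ≤ q.2 :=
    nat_le.comp (fst.comp (unpair.comp fst)) snd
  exact ⟨(h1.and (EIn.of_primrec h2)).exists.congr fun n => by simp [_root_.cut],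
    (h1.and (EIn.of_primrec h2.not)).exists.congr fun n => by simp [_root_.cut]⟩

theorem exists_pair : ∃ B1 B2 : Set ℕ, ELow B1 ∧ ELow B2 ∧ ¬ CE B1 ∧ ¬ CE B2 ∧
    ¬ ∃ C : Set ℕ, ELow C ∧ ¬ ELow (oplus B1 C) ∧ ¬ ELow (oplus B2 C) := by
  refine ⟨cut, cutᶜ, kpair_cut.elow_left EIn.cut.1 EIn.cut.2 not_ce_compl_cut,
    kpair_cut.symm.elow_left EIn.cut.2 EIn.cut.1 not_ce_cut, not_ce_cut, not_ce_compl_cut, ?_⟩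
  rintro ⟨C, hC, h1, h2⟩
  -- if `cutᶜ ≤_e C` then `cutᶜ ⊕ C ≤_e C`; otherwise the pair makes `cut ⊕ C` low
  by_cases h : EIn C (fun n : ℕ => n ∈ cutᶜ)
  · exact h2 (hC.mono (h.oplus (EIn.self C)))
  · exact h1 (kpair_cut.elow EIn.cut.1 EIn.cut.2 hC h)

/-- The e-low sets do not form a splitting class: there are non-c.e. e-low
`B₁, B₂` such that no e-low `C` has both `B₁ ⊕ C` and `B₂ ⊕ C` not e-low;
in particular the splitting condition fails for `A = ∅`, `𝓑 = {B₁, B₂}`. -/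
theorem elow_not_splitting_class :
    ¬ SplittingClassE {X | ELow X} ∧
    ∃ B1 B2 : Set ℕ, ELow B1 ∧ ELow B2 ∧ ¬ CE B1 ∧ ¬ CE B2 ∧
      ¬ ∃ C : Set ℕ, ELow C ∧ ¬ ELow (oplus B1 C) ∧ ¬ ELow (oplus B2 C) := by
  refine ⟨?_, exists_pair⟩
  obtain ⟨B1, B2, hB1, hB2, hn1, hn2, hC⟩ := exists_pair
  rintro ⟨-, -, h⟩
  obtain ⟨C, hCl, -, -, hCB⟩ := h ∅ elow_empty {B1, B2} (by simp)
    (by rintro B (rfl | rfl) <;> assumption)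
    (by rintro B (rfl | rfl) hB <;> [apply hn1; apply hn2] <;> exact ce_iff.2 (enumRed_iff.1 hB))
  exact hC ⟨C, hCl, hCB B1 (by simp), hCB B2 (by simp)⟩
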